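/- arXiv:2306.13558 — 3 statements merged into one kernel-verified Lean document; each statement's English description precedes it below -/
import Mathlib

section
/- Sheppard's orthant probability formula: for every ρ ∈ (−1, 1), the integral of f_ρ over the positive quadrant (0,∞) × (0,∞) equals 1/4 + arcsin(ρ)/(2π). -/
/-!
Sheppard's formula is proved by Tonelli's theorem, in `ℝ≥0∞` so that no integrability has to be
checked beforehand. Substituting `y = x t` in the inner integral and exchanging the order of
integration turns the integral of `exp (-(x² - 2ρxy + y²) / (2(1-ρ²)))` over the quadrant into
`∫ t > 0, ∫ x > 0, x exp (-(1 - 2ρt + t²) x² / (2(1-ρ²)))`. The integral in `x` is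
`(1-ρ²) / (1 - 2ρt + t²)`, whose primitive in `t` is `s arctan ((t - ρ) / s)` with `s = √(1-ρ²)`.
The total is `s (π/2 + arctan (ρ/s)) = s (π/2 + arcsin ρ)`, and the normalizing constant
`1 / (2πs)` gives the result.
-/

open MeasureTheory

/-- The bivariate normal density with zero means, unit variances and correlation `ρ`. -/
noncomputable def bvnDensity (ρ : ℝ) (p : ℝ × ℝ) : ℝ :=
  (2 * Real.pi * Real.sqrt (1 - ρ ^ 2))⁻¹ *
    Real.exp (-(p.1 ^ 2 - 2 * ρ * p.1 * p.2 + p.2 ^ 2) / (2 * (1 - ρ ^ 2)))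

open Set Filter Topology

/-- The fundamental theorem of calculus on `(0, ∞)` for a nonnegative derivative, as an identity
between extended nonnegative reals. -/
lemma lintegral_Ioi_of_hasDerivAt {f f' : ℝ → ℝ} {l : ℝ} (hd : ∀ x, HasDerivAt f (f' x) x)
    (hn : ∀ x ∈ Ioi (0 : ℝ), 0 ≤ f' x) (hl : Tendsto f atTop (𝓝 l)) :
    ∫⁻ x in Ioi (0 : ℝ), ENNReal.ofReal (f' x) = ENNReal.ofReal (l - f 0) := by
  rw [← integral_Ioi_of_hasDerivAt_of_nonneg (hd 0).continuousAt.continuousWithinAt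
    (fun x _ => hd x) hn hl]
  refine (ofReal_integral_eq_lintegral_ofReal ?_ ?_).symm
  · exact integrableOn_Ioi_deriv_of_nonneg (hd 0).continuousAt.continuousWithinAt
      (fun x _ => hd x) hn hl
  · exact (ae_restrict_iff' measurableSet_Ioi).2 (Eventually.of_forall hn)

lemma lintegral_Ioi_mul_exp_neg_mul_sq {c : ℝ} (hc : 0 < c) :
    ∫⁻ x in Ioi (0 : ℝ), ENNReal.ofReal (x * Real.exp (-(c * x ^ 2))) =
      ENNReal.ofReal (1 / (2 * c)) := by
  have h := lintegral_Ioi_of_hasDerivAt (f := fun x => -Real.exp (-(c * x ^ 2)) / (2 * c))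
    (f' := fun x => x * Real.exp (-(c * x ^ 2))) (l := 0) ?_ ?_ ?_
  · rw [h]; congr 1; simp; ring
  · intro x
    have h1 := ((((hasDerivAt_pow 2 x).const_mul c).neg).exp.neg).div_const (2 * c)
    refine h1.congr_deriv ?_
    simp
    field_simp
  · intro x hx
    have : 0 < x := hx
    positivity
  · have h1 : Tendsto (fun x : ℝ => c * x ^ 2) atTop atTop :=
      (tendsto_pow_atTop two_ne_zero).const_mul_atTop hc
    have h2 := ((Real.tendsto_exp_neg_atTop_nhds_zero.comp h1).neg).div_const (2 * c)
    simpa [Function.comp_def] using h2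

lemma lintegral_Ioi_rational {ρ s : ℝ} (hs : 0 < s) :
    ∫⁻ t in Ioi (0 : ℝ), ENNReal.ofReal (s ^ 2 / ((t - ρ) ^ 2 + s ^ 2)) =
      ENNReal.ofReal (s * (Real.pi / 2 + Real.arctan (ρ / s))) := by
  have h := lintegral_Ioi_of_hasDerivAt (f := fun t => s * Real.arctan ((t - ρ) / s))
    (f' := fun t => s ^ 2 / ((t - ρ) ^ 2 + s ^ 2)) (l := s * (Real.pi / 2)) ?_ ?_ ?_
  · rw [h]; congr 1
    simp only [zero_sub, neg_div, Real.arctan_neg]; ring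
  · intro x
    have h1 := ((((hasDerivAt_id x).sub_const ρ).div_const s).arctan).const_mul s
    refine h1.congr_deriv ?_
    simp only [id]
    field_simp
    ring
  · intro x _
    positivity
  · have h1 : Tendsto (fun t : ℝ => (t - ρ) / s) atTop atTop :=
      (tendsto_atTop_add_const_right _ (-ρ) tendsto_id).atTop_div_const hs
    exact ((Real.tendsto_arctan_atTop.mono_right nhdsWithin_le_nhds).comp h1).const_mul s

lemma lintegral_Ioi_comp_mul_left (g : ℝ → ENNReal) {x : ℝ} (hx : 0 < x) :
    ∫⁻ y in Ioi (0 : ℝ), g y = ∫⁻ t in Ioi (0 : ℝ), ENNReal.ofReal x * g (x * t) := by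
  have him : (fun t => x * t) '' Ioi (0 : ℝ) = Ioi 0 := by
    rw [image_mul_left_Ioi hx, mul_zero]
  have h := lintegral_image_eq_lintegral_abs_deriv_mul (f := fun t => x * t) (f' := fun _ => x)
    (measurableSet_Ioi (a := (0 : ℝ)))
    (fun t _ => by simpa using ((hasDerivAt_id t).const_mul x).hasDerivWithinAt)
    (mul_right_injective₀ hx.ne').injOn g
  rwa [him, abs_of_pos hx] at h

/-- The unnormalized orthant integral, with `s` in the role of `√(1 - ρ²)`. -/
lemma lintegral_quadrant {ρ s : ℝ} (hs : 0 < s) (hs2 : s ^ 2 = 1 - ρ ^ 2) :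
    ∫⁻ p : ℝ × ℝ in Ioi (0 : ℝ) ×ˢ Ioi (0 : ℝ),
      ENNReal.ofReal (Real.exp (-(p.1 ^ 2 - 2 * ρ * p.1 * p.2 + p.2 ^ 2) / (2 * s ^ 2))) =
      ENNReal.ofReal (s * (Real.pi / 2 + Real.arctan (ρ / s))) := by
  rw [Measure.volume_eq_prod, ← Measure.prod_restrict, lintegral_prod _ (by fun_prop)]
  have h1 : ∀ x ∈ Ioi (0 : ℝ), (∫⁻ y in Ioi (0 : ℝ),
      ENNReal.ofReal (Real.exp (-(x ^ 2 - 2 * ρ * x * y + y ^ 2) / (2 * s ^ 2)))) =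
      ∫⁻ t in Ioi (0 : ℝ),
        ENNReal.ofReal (x * Real.exp (-(((t - ρ) ^ 2 + s ^ 2) / (2 * s ^ 2) * x ^ 2))) := by
    intro x hx
    rw [lintegral_Ioi_comp_mul_left _ hx]
    refine lintegral_congr fun t => ?_
    rw [← ENNReal.ofReal_mul (le_of_lt hx)]
    congr 3
    -- `1 - 2ρt + t² = (t - ρ)² + (1 - ρ²)`
    have : x ^ 2 - 2 * ρ * x * (x * t) + (x * t) ^ 2 = ((t - ρ) ^ 2 + s ^ 2) * x ^ 2 := by
      rw [hs2]; ring
    rw [this]; ring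
  rw [setLIntegral_congr_fun measurableSet_Ioi h1, lintegral_lintegral_swap (by fun_prop),
    ← lintegral_Ioi_rational hs]
  refine lintegral_congr fun t => ?_
  rw [lintegral_Ioi_mul_exp_neg_mul_sq (by positivity)]
  congr 1
  field_simp

/-- Sheppard's orthant probability formula. -/
theorem sheppard_orthant (ρ : ℝ) (hρ : ρ ∈ Set.Ioo (-1 : ℝ) 1) :
    ∫ p : ℝ × ℝ in Set.Ioi (0 : ℝ) ×ˢ Set.Ioi (0 : ℝ), bvnDensity ρ p =
      1 / 4 + Real.arcsin ρ / (2 * Real.pi) := by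
  obtain ⟨h1, h2⟩ := hρ
  have hpos : 0 < 1 - ρ ^ 2 := by nlinarith
  have hs : 0 < Real.sqrt (1 - ρ ^ 2) := Real.sqrt_pos.2 hpos
  have hs2 : Real.sqrt (1 - ρ ^ 2) ^ 2 = 1 - ρ ^ 2 := Real.sq_sqrt hpos.le
  have hq := lintegral_quadrant hs hs2
  rw [hs2, ← Real.arcsin_eq_arctan ⟨h1, h2⟩] at hq
  have hnn : 0 ≤ Real.pi / 2 + Real.arcsin ρ := by
    linarith [Real.neg_pi_div_two_le_arcsin ρ]
  simp only [bvnDensity]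
  rw [integral_const_mul, integral_eq_lintegral_of_nonneg_ae
    (Eventually.of_forall fun _ => (Real.exp_pos _).le)
    (Measurable.aestronglyMeasurable (by fun_prop)), hq, ENNReal.toReal_ofReal (by positivity)]
  have := Real.pi_pos
  field_simp
  ring
end

section
/- Arcsine law for sign correlations (Van Vleck's formula): for every ρ ∈ (−1, 1), the integral over ℝ² of sign(x)·sign(y)·f_ρ(x,y) dx dy equals (2/π)·arcsin(ρ), where sign(u) = 1 for u > 0, −1 for u < 0, and 0 for u = 0. -/
/-!
Write `ρ = sin α` with `α = arcsin ρ`, so that `√(1 - ρ²) = cos α > 0`. The linear substitution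
`(x, y) = (u, u sin α + v cos α)` turns the density into the standard Gaussian density on the plane
(`integral_shear`), and in polar coordinates `u = r cos θ`, `v = r sin θ` the integrand becomes
`r exp (-r² / 2) / (2π) * (sign (cos θ) * sign (sin (θ + α)))`, a product of a function of `r` and
a function of `θ`. The radial integral is `1` (`integral_radial`). The angular factor is a step
function whose integral over a full period is `4 α` (`integral_angular`).
-/

open MeasureTheory

/-- The Jacobian determinant of `(u, v) ↦ (u, a u + b v)` is `b`. -/
lemma integral_shear (a b : ℝ) (hb : 0 < b) (g : ℝ × ℝ → ℝ) :
    ∫ p, g p = ∫ p : ℝ × ℝ, b * g (p.1, a * p.1 + b * p.2) := by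
  let L : ℝ × ℝ →L[ℝ] ℝ × ℝ :=
    (Matrix.toLin (.finTwoProd ℝ) (.finTwoProd ℝ) !![1, 0; a, b]).toContinuousLinearMap
  have hL : ∀ p, L p = (p.1, a * p.1 + b * p.2) := by
    intro p
    simp [L, Matrix.toLin_finTwoProd_apply]
  have hdet : L.det = b := by
    simp [L, LinearMap.det_toContinuousLinearMap, LinearMap.det_toLin, Matrix.det_fin_two_of]
  have hinj : Function.Injective L := by
    rintro ⟨x, y⟩ ⟨x', y'⟩ h
    simp only [hL, Prod.mk.injEq] at h
    obtain ⟨rfl, h2⟩ := h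
    have : b * y = b * y' := by linarith
    simpa using mul_left_cancel₀ hb.ne' this
  have hsurj : Function.Surjective L := by
    rintro ⟨x, y⟩
    refine ⟨(x, (y - a * x) / b), ?_⟩
    simp only [hL, Prod.mk.injEq, true_and]
    field_simp
    ring
  have key := integral_image_eq_integral_abs_det_fderiv_smul (volume : Measure (ℝ × ℝ))
    MeasurableSet.univ (f := L) (f' := fun _ => L)
    (fun x _ => L.hasFDerivAt.hasFDerivWithinAt) hinj.injOn g
  rw [Set.image_univ, hsurj.range_eq] at key
  simpa [hdet, abs_of_pos hb, hL] using key

lemma integral_radial : ∫ r in Set.Ioi (0 : ℝ), r * Real.exp (-(r ^ 2) / 2) = 1 := by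
  have h := integral_rpow_mul_exp_neg_mul_rpow (p := 2) (q := 1) (b := 1 / 2)
    (by norm_num) (by norm_num) (by norm_num)
  norm_num [Real.rpow_neg_one] at h
  rw [← h]
  congr 1 with r
  ring_nf

lemma intervalIntegral_of_eq_const {g : ℝ → ℝ} {a b c : ℝ} (hab : a ≤ b)
    (h : ∀ x ∈ Set.Ioo a b, g x = c) :
    IntervalIntegrable g volume a b ∧ ∫ x in a..b, g x = c * (b - a) := by
  have hae : ∀ᵐ x ∂(volume : Measure ℝ), x ∈ Set.uIoc a b → g x = c := by
    have : ∀ᵐ x ∂(volume : Measure ℝ), x ≠ b := by simp [ae_iff]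
    filter_upwards [this] with x hx hx'
    rw [Set.uIoc_of_le hab] at hx'
    exact h x ⟨hx'.1, lt_of_le_of_ne hx'.2 hx⟩
  constructor
  · refine (intervalIntegrable_const (c := c)).congr_ae ?_
    rw [Filter.EventuallyEq, ae_restrict_iff' measurableSet_uIoc]
    filter_upwards [hae] with x hx hx'
    exact (hx hx').symm
  · rw [intervalIntegral.integral_congr_ae hae]
    simp [mul_comm]

/-- The integrand has period `2π`; on `(-π/2, 3π/2)` it changes sign at `-α`, `π/2` and `π - α`. -/
lemma integral_angular (α : ℝ) (h1 : -(Real.pi / 2) < α) (h2 : α < Real.pi / 2) :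
    ∫ θ in Set.Ioo (-Real.pi) Real.pi, Real.sign (Real.cos θ) * Real.sign (Real.sin (θ + α)) =
      4 * α := by
  set g : ℝ → ℝ := fun θ => Real.sign (Real.cos θ) * Real.sign (Real.sin (θ + α)) with hg
  have hper : Function.Periodic g (2 * Real.pi) := by
    intro x
    simp only [hg, Real.cos_add_two_pi]
    rw [show x + 2 * Real.pi + α = x + α + 2 * Real.pi by ring, Real.sin_add_two_pi]
  have hpi := Real.pi_pos
  have hcos_neg : ∀ x, Real.pi / 2 < x → x < 3 * Real.pi / 2 → Real.cos x < 0 := fun x hx hx' =>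
    Real.cos_neg_of_pi_div_two_lt_of_lt hx (by linarith)
  have hsin_neg : ∀ x, Real.pi < x → x < 2 * Real.pi → Real.sin x < 0 := fun x hx hx' => by
    rw [← Real.sin_sub_two_pi]
    exact Real.sin_neg_of_neg_of_neg_pi_lt (by linarith) (by linarith)
  obtain ⟨i1, e1⟩ := intervalIntegral_of_eq_const (g := g) (a := -(Real.pi / 2)) (b := -α)
    (c := -1) (by linarith) (fun x hx => by
      simp only [hg]
      rw [Real.sign_of_pos (Real.cos_pos_of_mem_Ioo ⟨by linarith [hx.1], by linarith [hx.2]⟩),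
        Real.sign_of_neg (Real.sin_neg_of_neg_of_neg_pi_lt (by linarith [hx.2])
          (by linarith [hx.1]))]
      norm_num)
  obtain ⟨i2, e2⟩ := intervalIntegral_of_eq_const (g := g) (a := -α) (b := Real.pi / 2)
    (c := 1) (by linarith) (fun x hx => by
      simp only [hg]
      rw [Real.sign_of_pos (Real.cos_pos_of_mem_Ioo ⟨by linarith [hx.1], by linarith [hx.2]⟩),
        Real.sign_of_pos (Real.sin_pos_of_pos_of_lt_pi (by linarith [hx.1])
          (by linarith [hx.2]))]
      norm_num)
  obtain ⟨i3, e3⟩ := intervalIntegral_of_eq_const (g := g) (a := Real.pi / 2) (b := Real.pi - α)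
    (c := -1) (by linarith) (fun x hx => by
      simp only [hg]
      rw [Real.sign_of_neg (hcos_neg x hx.1 (by linarith [hx.2])),
        Real.sign_of_pos (Real.sin_pos_of_pos_of_lt_pi (by linarith [hx.1])
          (by linarith [hx.2]))]
      norm_num)
  obtain ⟨i4, e4⟩ := intervalIntegral_of_eq_const (g := g) (a := Real.pi - α)
    (b := 3 * Real.pi / 2) (c := 1) (by linarith) (fun x hx => by
      simp only [hg]
      rw [Real.sign_of_neg (hcos_neg x (by linarith [hx.1]) hx.2),
        Real.sign_of_neg (hsin_neg _ (by linarith [hx.1]) (by linarith [hx.2]))]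
      norm_num)
  rw [← integral_Ioc_eq_integral_Ioo, ← intervalIntegral.integral_of_le (by linarith)]
  have hshift := hper.intervalIntegral_add_eq (-Real.pi) (-(Real.pi / 2))
  rw [show -Real.pi + 2 * Real.pi = Real.pi by ring,
    show -(Real.pi / 2) + 2 * Real.pi = 3 * Real.pi / 2 by ring] at hshift
  rw [hshift, ← intervalIntegral.integral_add_adjacent_intervals ((i1.trans i2).trans i3) i4,
    ← intervalIntegral.integral_add_adjacent_intervals (i1.trans i2) i3,
    ← intervalIntegral.integral_add_adjacent_intervals i1 i2, e1, e2, e3, e4]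
  ring

lemma sign_mul_of_pos_left {r x : ℝ} (hr : 0 < r) : Real.sign (r * x) = Real.sign x := by
  rcases lt_trichotomy x 0 with h | rfl | h
  · rw [Real.sign_of_neg h, Real.sign_of_neg (mul_neg_of_pos_of_neg hr h)]
  · simp
  · rw [Real.sign_of_pos h, Real.sign_of_pos (mul_pos hr h)]

/-- Van Vleck's arcsine law for sign correlations. -/
theorem vanVleck_arcsine (ρ : ℝ) (hρ : ρ ∈ Set.Ioo (-1 : ℝ) 1) :
    ∫ p : ℝ × ℝ, Real.sign p.1 * Real.sign p.2 * bvnDensity ρ p =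
      (2 / Real.pi) * Real.arcsin ρ := by
  obtain ⟨hl, hu⟩ := hρ
  set α := Real.arcsin ρ with hα
  have hsin : Real.sin α = ρ := Real.sin_arcsin hl.le hu.le
  have hα1 : -(Real.pi / 2) < α := Real.neg_pi_div_two_lt_arcsin.2 hl
  have hα2 : α < Real.pi / 2 := Real.arcsin_lt_pi_div_two.2 hu
  have hcos : 0 < Real.cos α := Real.cos_pos_of_mem_Ioo ⟨hα1, hα2⟩
  have hsq : 1 - ρ ^ 2 = Real.cos α ^ 2 := by
    rw [← hsin]; linarith [Real.sin_sq_add_cos_sq α]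
  have hsqrt : Real.sqrt (1 - ρ ^ 2) = Real.cos α := by
    rw [hsq, Real.sqrt_sq hcos.le]
  have hpi := Real.pi_pos
  rw [integral_shear ρ (Real.cos α) hcos, ← integral_comp_polarCoord_symm]
  have hstep : ∀ p ∈ polarCoord.target,
      p.1 • (fun p : ℝ × ℝ => Real.cos α * (Real.sign p.1 * Real.sign (ρ * p.1 + Real.cos α * p.2) *
        bvnDensity ρ (p.1, ρ * p.1 + Real.cos α * p.2))) (polarCoord.symm p) =
      (p.1 * Real.exp (-(p.1 ^ 2) / 2)) * ((2 * Real.pi)⁻¹ *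
        (Real.sign (Real.cos p.2) * Real.sign (Real.sin (p.2 + α)))) := by
    rintro ⟨r, θ⟩ ⟨hr, -⟩
    simp only [Set.mem_Ioi] at hr
    simp only [polarCoord_symm_apply, smul_eq_mul, bvnDensity, hsqrt]
    have e1 : ρ * (r * Real.cos θ) + Real.cos α * (r * Real.sin θ) =
        r * Real.sin (θ + α) := by
      rw [Real.sin_add, hsin]; ring
    -- The quadratic form of the density satisfies
    -- `x² - 2ρxy + y² = (1 - ρ²)(u² + v²) = (1 - ρ²) r²`.
    have e2 : -((r * Real.cos θ) ^ 2 - 2 * ρ * (r * Real.cos θ) * (r * Real.sin (θ + α)) +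
        (r * Real.sin (θ + α)) ^ 2) / (2 * (1 - ρ ^ 2)) = -(r ^ 2) / 2 := by
      rw [div_eq_div_iff (by rw [hsq]; positivity) (by norm_num), Real.sin_add, hsin]
      linear_combination -(2 * r ^ 2 * (1 - ρ ^ 2)) * Real.sin_sq_add_cos_sq θ +
        (2 * r ^ 2 * Real.sin θ ^ 2) * hsq
    rw [e1, e2, sign_mul_of_pos_left hr, sign_mul_of_pos_left hr]
    field_simp
  rw [setIntegral_congr_fun polarCoord.open_target.measurableSet hstep, polarCoord_target,
    Measure.volume_eq_prod,
    setIntegral_prod_mul (fun r : ℝ => r * Real.exp (-(r ^ 2) / 2)) (fun θ : ℝ => (2 * Real.pi)⁻¹ *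
        (Real.sign (Real.cos θ) * Real.sign (Real.sin (θ + α)))),
    integral_radial, integral_const_mul, integral_angular α hα1 hα2]
  field_simp
  norm_num
end

section
/- Let μ be a probability measure on ℝ⁴ that is invariant under the negation map x ↦ −x and assigns measure zero to each coordinate hyperplane {x : x_i = 0}, i = 1,…,4. Then ∫ sign(x₁)sign(x₂)sign(x₃)sign(x₄) dμ(x) = 16·μ({x : x₁ > 0, x₂ > 0, x₃ > 0, x₄ > 0}) − 1 − Σ_{1≤i<j≤4} ∫ sign(x_i)sign(x_j) dμ(x). -/
/-!
For signs `s₁, …, s₄ ∈ {-1, 1}`, the even part of `∏ (1 + sᵢ)` gives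
`∏ (1 + sᵢ) + ∏ (1 - sᵢ) = 2 (1 + ∑_{i<j} sᵢ sⱼ + s₁ s₂ s₃ s₄)`, and the left-hand side is `16` when
all the signs agree and `0` otherwise. Off the coordinate hyperplanes, which are null, this says
that the product of the four signs equals `8 (1_P + 1_N) - 1 - ∑_{i<j} sᵢ sⱼ`, where `P` and `N` are
the open positive and negative orthants. Integrating, and using `μ N = μ P`, which is the
invariance under negation, gives the theorem.
-/

open MeasureTheory

lemma measurable_real_sign : Measurable Real.sign := by
  unfold Real.sign
  exact Measurable.ite measurableSet_Iio measurable_const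
    (Measurable.ite measurableSet_Ioi measurable_const measurable_const)

lemma norm_real_sign_le (r : ℝ) : ‖Real.sign r‖ ≤ 1 := by
  rcases Real.sign_apply_eq r with h | h | h <;> simp [h]

lemma integrable_sign_mul_sign (μ : Measure (Fin 4 → ℝ)) [IsProbabilityMeasure μ] (i j : Fin 4) :
    Integrable (fun x : Fin 4 → ℝ => Real.sign (x i) * Real.sign (x j)) μ := by
  refine Integrable.of_bound (C := 1) ?_ (Filter.Eventually.of_forall fun x => ?_)
  · exact ((measurable_real_sign.comp (measurable_pi_apply i)).mul
      (measurable_real_sign.comp (measurable_pi_apply j))).aestronglyMeasurable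
  · rw [norm_mul]
    exact mul_le_one₀ (norm_real_sign_le _) (norm_nonneg _) (norm_real_sign_le _)

/-- The identity for four signs, with the orthants entering through their indicator functions. -/
lemma prod_sign_eq (x : Fin 4 → ℝ) (hx : ∀ i, x i ≠ 0) :
    ∏ i : Fin 4, Real.sign (x i) =
      8 * (Set.indicator {x : Fin 4 → ℝ | ∀ i, 0 < x i} (fun _ => (1 : ℝ)) x +
        Set.indicator {x : Fin 4 → ℝ | ∀ i, x i < 0} (fun _ => (1 : ℝ)) x) - 1 -
        ∑ i : Fin 4, ∑ j : Fin 4,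
          if i < j then Real.sign (x i) * Real.sign (x j) else 0 := by
  have h0 := lt_or_gt_of_ne (hx 0)
  have h1 := lt_or_gt_of_ne (hx 1)
  have h2 := lt_or_gt_of_ne (hx 2)
  have h3 := lt_or_gt_of_ne (hx 3)
  simp only [Fin.prod_univ_four, Fin.sum_univ_four, Set.indicator_apply, Set.mem_ofPred_eq,
    Fin.forall_fin_succ, Fin.isValue]
  rcases h0 with h0 | h0 <;> rcases h1 with h1 | h1 <;> rcases h2 with h2 | h2 <;>
    rcases h3 with h3 | h3 <;>
    simp [Real.sign_of_neg, Real.sign_of_pos, h0, h1, h2, h3, h0.not_gt, h1.not_gt, h2.not_gt,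
      h3.not_gt] <;> norm_num

theorem sign_fourth_moment_orthant
    (μ : Measure (Fin 4 → ℝ)) [IsProbabilityMeasure μ]
    (hsymm : Measure.map (fun x => -x) μ = μ)
    (hplane : ∀ i : Fin 4, μ {x | x i = 0} = 0) :
    ∫ x, (∏ i : Fin 4, Real.sign (x i)) ∂μ =
      16 * (μ {x | ∀ i : Fin 4, 0 < x i}).toReal - 1 -
        ∑ i : Fin 4, ∑ j : Fin 4,
          if i < j then ∫ x, Real.sign (x i) * Real.sign (x j) ∂μ else 0 := by
  have hP : MeasurableSet {x : Fin 4 → ℝ | ∀ i, 0 < x i} := by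
    rw [Set.ofPred_forall]
    exact MeasurableSet.iInter fun i => measurableSet_lt measurable_const (measurable_pi_apply i)
  have hN : MeasurableSet {x : Fin 4 → ℝ | ∀ i, x i < 0} := by
    rw [Set.ofPred_forall]
    exact MeasurableSet.iInter fun i => measurableSet_lt (measurable_pi_apply i) measurable_const
  have hPN : μ {x : Fin 4 → ℝ | ∀ i, x i < 0} = μ {x : Fin 4 → ℝ | ∀ i, 0 < x i} := by
    conv_rhs => rw [← hsymm, Measure.map_apply measurable_neg hP]
    simp
  have hne : ∀ᵐ x ∂μ, ∀ i : Fin 4, x i ≠ 0 := by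
    rw [ae_all_iff]
    intro i
    rw [ae_iff]
    simpa using hplane i
  rw [integral_congr_ae (hne.mono prod_sign_eq)]
  have iP := (integrable_const (μ := μ) (1 : ℝ)).indicator hP
  have iN := (integrable_const (μ := μ) (1 : ℝ)).indicator hN
  have iS : ∀ i j : Fin 4, Integrable
      (fun x : Fin 4 → ℝ => if i < j then Real.sign (x i) * Real.sign (x j) else 0) μ := by
    intro i j
    split_ifs
    · exact integrable_sign_mul_sign μ i j
    · exact integrable_zero _ _ _
  have iSS : ∀ i : Fin 4, Integrable (fun x : Fin 4 → ℝ => ∑ j : Fin 4,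
      if i < j then Real.sign (x i) * Real.sign (x j) else 0) μ :=
    fun i => integrable_finsetSum _ fun j _ => iS i j
  have i8 := (iP.add iN).const_mul 8
  simp only [Pi.add_apply] at i8
  have i81 := i8.sub (integrable_const 1)
  simp only [Pi.sub_def] at i81
  rw [integral_sub i81 (integrable_finsetSum _ fun i _ => iSS i),
    integral_sub i8 (integrable_const 1), integral_const_mul, integral_add iP iN,
    integral_indicator_const _ hP, integral_indicator_const _ hN,
    integral_finsetSum _ fun i _ => iSS i]
  congr 1
  · simp only [Measure.real, hPN]
    simp
    ring
  · refine Finset.sum_congr rfl fun i _ => ?_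
    rw [integral_finsetSum _ fun j _ => iS i j]
    refine Finset.sum_congr rfl fun j _ => ?_
    split_ifs <;> simp
end
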